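/- Let 𝓔_X be a ballean on X and 𝓔_Y a ballean on Y, both unbounded, with cov(𝓑_X) < add(𝓑_Y), where 𝓑_X and 𝓑_Y are the respective bornologies of bounded sets. If X and Y are both so-bounded, then the product ballean on X × Y is so-bounded. -/

import Mathlib

universe u

/-- A ballean on a set `X`: a family of entourages containing the diagonal,
closed (up to enlargement) under `E ∘ F⁻¹`, and covering `X × X`. -/
structure Ballean (X : Type*) where
  ent : Set (Set (X × X))
  diag : ∀ E ∈ ent, ∀ x : X, (x, x) ∈ E
  comp : ∀ E ∈ ent, ∀ F ∈ ent, ∃ D ∈ ent,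
    ∀ x z : X, (∃ y : X, (x, y) ∈ E ∧ (z, y) ∈ F) → (x, z) ∈ D
  cover : ∀ x y : X, ∃ E ∈ ent, (x, y) ∈ E

/-- The ball `E[x] = {y : (x,y) ∈ E}`. -/
def ball {X : Type*} (E : Set (X × X)) (x : X) : Set X := {y | (x, y) ∈ E}

/-- A set is bounded in a ballean if it is contained in some ball. -/
def Ballean.Bdd {X : Type*} (B : Ballean X) (S : Set X) : Prop :=
  ∃ E ∈ B.ent, ∃ x : X, S ⊆ ball E x

/-- `cof 𝓑`: minimal cardinality of a cofinal subfamily of `𝓑`. -/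
noncomputable def bornCof {X : Type u} (𝓑 : Set (Set X)) : Cardinal.{u} :=
  sInf {c : Cardinal.{u} | ∃ 𝓐 : Set (Set X), 𝓐 ⊆ 𝓑 ∧ Cardinal.mk 𝓐 = c ∧
    ∀ B ∈ 𝓑, ∃ A ∈ 𝓐, B ⊆ A}

/-- `non 𝓑`: minimal cardinality of a subset of `X` not in `𝓑`. -/
noncomputable def bornNon {X : Type u} (𝓑 : Set (Set X)) : Cardinal.{u} :=
  sInf {c : Cardinal.{u} | ∃ A : Set X, A ∉ 𝓑 ∧ Cardinal.mk A = c}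

/-- `cov 𝓑`: minimal cardinality of a subfamily of `𝓑` covering `X`. -/
noncomputable def bornCov {X : Type u} (𝓑 : Set (Set X)) : Cardinal.{u} :=
  sInf {c : Cardinal.{u} | ∃ 𝓐 : Set (Set X), 𝓐 ⊆ 𝓑 ∧ Cardinal.mk 𝓐 = c ∧
    ⋃₀ 𝓐 = Set.univ}

/-- `add 𝓑`: minimal cardinality of a subfamily of `𝓑` whose union is not in `𝓑`. -/
noncomputable def bornAdd {X : Type u} (𝓑 : Set (Set X)) : Cardinal.{u} :=
  sInf {c : Cardinal.{u} | ∃ 𝓐 : Set (Set X), 𝓐 ⊆ 𝓑 ∧ Cardinal.mk 𝓐 = c ∧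
    ⋃₀ 𝓐 ∉ 𝓑}

/-- A ballean is so-bounded if every slowly oscillating `f : X → ℝ` is bounded
outside some bounded set. -/
def Ballean.SoBounded {X : Type*} (B : Ballean X) : Prop :=
  ∀ f : X → ℝ,
    (∀ E ∈ B.ent, ∀ ε : ℝ, 0 < ε → ∃ S : Set X, B.Bdd S ∧
      ∀ x ∉ S, ∀ a ∈ ball E x, ∀ b ∈ ball E x, |f a - f b| < ε) →
    ∃ S : Set X, B.Bdd S ∧ ∃ C : ℝ, ∀ x ∉ S, |f x| ≤ C

theorem Ballean.inv_aux {X : Type*} (B : Ballean X) {E : Set (X × X)} (hE : E ∈ B.ent) :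
    ∃ D ∈ B.ent, ∀ x z : X, (z, x) ∈ E → (x, z) ∈ D := by
  obtain ⟨D, hD, h⟩ := B.comp E hE E hE
  exact ⟨D, hD, fun x z hz => h x z ⟨x, B.diag E hE x, hz⟩⟩

theorem Ballean.bdd_at {X : Type*} (B : Ballean X) {S : Set X} (hS : B.Bdd S) (x₀ : X) :
    ∃ E ∈ B.ent, S ⊆ ball E x₀ := by
  obtain ⟨E, hE, x, hx⟩ := hS
  obtain ⟨G, hG, hGx⟩ := B.cover x₀ x
  obtain ⟨D, hD, h⟩ := B.inv_aux hE
  obtain ⟨D', hD', h'⟩ := B.comp G hG D hD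
  exact ⟨D', hD', fun z hz => h' x₀ z ⟨x, hGx, h z x (hx hz)⟩⟩

theorem Ballean.bdd_union {X : Type*} (B : Ballean X) {S T : Set X} (hS : B.Bdd S)
    (hT : B.Bdd T) : B.Bdd (S ∪ T) := by
  obtain ⟨E, hE, x, hx⟩ := hS
  obtain ⟨F, hF, hFx⟩ := B.bdd_at hT x
  obtain ⟨F', hF', h⟩ := B.inv_aux hF
  obtain ⟨D, hD, h'⟩ := B.comp E hE F' hF'
  refine ⟨D, hD, x, ?_⟩
  rintro z (hz | hz)
  · exact h' x z ⟨z, hx hz, B.diag F' hF' z⟩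
  · exact h' x z ⟨x, B.diag E hE x, h z x (hFx hz)⟩

theorem Ballean.ent_nonempty_of_so {X : Type*} (B : Ballean X) (h : B.SoBounded) :
    ∃ E, E ∈ B.ent := by
  by_contra hne
  obtain ⟨S, ⟨E, hE, _⟩, _⟩ := h (fun _ => 0) (fun E hE => (hne ⟨E, hE⟩).elim)
  exact hne ⟨E, hE⟩

/-- If `X`, `Y` are unbounded so-bounded balleans with `cov 𝓑_X < add 𝓑_Y`,
then the product ballean on `X × Y` is so-bounded. -/
theorem prod_soBounded_of_cov_lt_add {X Y : Type u} (BX : Ballean X) (BY : Ballean Y)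
    (hXu : ¬ BX.Bdd Set.univ) (hYu : ¬ BY.Bdd Set.univ)
    (hcard : bornCov {S : Set X | BX.Bdd S} < bornAdd {T : Set Y | BY.Bdd T})
    (hXso : BX.SoBounded) (hYso : BY.SoBounded) :
    ∀ f : X × Y → ℝ,
      (∀ E ∈ BX.ent, ∀ F ∈ BY.ent, ∀ ε : ℝ, 0 < ε →
        ∃ (S : Set X) (T : Set Y), BX.Bdd S ∧ BY.Bdd T ∧
          ∀ p : X × Y, p ∉ S ×ˢ T →
            ∀ a ∈ (ball E p.1) ×ˢ (ball F p.2), ∀ b ∈ (ball E p.1) ×ˢ (ball F p.2),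
              |f a - f b| < ε) →
      ∃ (S : Set X) (T : Set Y), BX.Bdd S ∧ BY.Bdd T ∧
        ∃ C : ℝ, ∀ p : X × Y, p ∉ S ×ˢ T → |f p| ≤ C := by
  intro f hf
  obtain ⟨E₀, hE₀⟩ := BX.ent_nonempty_of_so hXso
  obtain ⟨F₀, hF₀⟩ := BY.ent_nonempty_of_so hYso
  obtain ⟨-, -, ⟨-, -, x₀, -⟩, ⟨-, -, y₀, -⟩, -⟩ := hf E₀ hE₀ F₀ hF₀ 1 one_pos
  -- a minimal cover of `X`
  have hne : {c : Cardinal.{u} | ∃ 𝓐 : Set (Set X), 𝓐 ⊆ {S : Set X | BX.Bdd S} ∧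
      Cardinal.mk 𝓐 = c ∧ ⋃₀ 𝓐 = Set.univ}.Nonempty := by
    refine ⟨_, {S : Set X | BX.Bdd S}, subset_rfl, rfl, ?_⟩
    refine Set.eq_univ_of_forall fun x => ?_
    exact ⟨{x}, ⟨E₀, hE₀, x, by rintro _ rfl; exact BX.diag E₀ hE₀ _⟩, rfl⟩
  obtain ⟨𝓐, hA, hAc, hAu⟩ := csInf_mem hne
  have key : ∀ A : 𝓐, ∃ T : Set Y, BY.Bdd T ∧
      ∀ y ∉ T, ∀ x ∈ A.1, |f (x, y) - f (x₀, y)| < 1 := by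
    intro A
    obtain ⟨E, hE, hEA⟩ := BX.bdd_at (hA A.2) x₀
    obtain ⟨S, T, -, hT, h⟩ := hf E hE F₀ hF₀ 1 one_pos
    refine ⟨T, hT, fun y hy x hx => ?_⟩
    exact h (x₀, y) (fun hp => hy hp.2) (x, y) ⟨hEA hx, BY.diag F₀ hF₀ y⟩
      (x₀, y) ⟨BX.diag E hE x₀, BY.diag F₀ hF₀ y⟩
  choose T hTb hT using key
  have hTU : BY.Bdd (⋃₀ Set.range T) := by
    by_contra hcon
    have h1 : bornAdd {T : Set Y | BY.Bdd T} ≤ Cardinal.mk (Set.range T) := by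
      refine csInf_le' ⟨Set.range T, ?_, rfl, hcon⟩
      rintro _ ⟨A, rfl⟩
      exact hTb A
    have h2 : Cardinal.mk (Set.range T) ≤ bornCov {S : Set X | BX.Bdd S} :=
      Cardinal.mk_range_le.trans hAc.le
    exact absurd hcard (not_lt.mpr (h1.trans h2))
  obtain ⟨T', hT', C, hC⟩ := hYso (fun y => f (x₀, y)) (by
    intro F hF ε hε
    obtain ⟨S, T, -, hT, h⟩ := hf E₀ hE₀ F hF ε hε
    refine ⟨T, hT, fun y hy a ha b hb => ?_⟩
    exact h (x₀, y) (fun hp => hy hp.2) (x₀, a) ⟨BX.diag E₀ hE₀ x₀, ha⟩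
      (x₀, b) ⟨BX.diag E₀ hE₀ x₀, hb⟩)
  obtain ⟨S₁, hS₁, C', hC'⟩ := hXso (fun x => f (x, y₀)) (by
    intro E hE ε hε
    obtain ⟨S, T, hS, -, h⟩ := hf E hE F₀ hF₀ ε hε
    refine ⟨S, hS, fun x hx a ha b hb => ?_⟩
    exact h (x, y₀) (fun hp => hx hp.1) (a, y₀) ⟨ha, BY.diag F₀ hF₀ y₀⟩
      (b, y₀) ⟨hb, BY.diag F₀ hF₀ y₀⟩)
  have hTT := BY.bdd_union hTU hT'
  obtain ⟨F, hF, hFT⟩ := BY.bdd_at hTT y₀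
  obtain ⟨S₂, T₂, hS₂, -, h₂⟩ := hf E₀ hE₀ F hF 1 one_pos
  refine ⟨S₁ ∪ S₂, _, BX.bdd_union hS₁ hS₂, hTT, max (C + 1) (C' + 1), ?_⟩
  rintro ⟨x, y⟩ hp
  by_cases hy : y ∈ ⋃₀ Set.range T ∪ T'
  · have hx : x ∉ S₁ ∪ S₂ := fun hx => hp ⟨hx, hy⟩
    have a1 := hC' x (fun h => hx (Or.inl h))
    have a2 := h₂ (x, y₀) (fun h => hx (Or.inr h.1)) (x, y) ⟨BX.diag E₀ hE₀ x, hFT hy⟩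
      (x, y₀) ⟨BX.diag E₀ hE₀ x, BY.diag F hF y₀⟩
    refine le_trans ?_ (le_max_right _ _)
    have := abs_sub_abs_le_abs_sub (f (x, y)) (f (x, y₀))
    try dsimp only at a1
    linarith
  · have a1 := hC y (fun h => hy (Or.inr h))
    obtain ⟨A, hAm, hxA⟩ : x ∈ ⋃₀ 𝓐 := hAu ▸ Set.mem_univ x
    have a2 := hT ⟨A, hAm⟩ y (fun h => hy (Or.inl ⟨_, ⟨_, rfl⟩, h⟩)) x hxA
    refine le_trans ?_ (le_max_left _ _)
    have := abs_sub_abs_le_abs_sub (f (x, y)) (f (x₀, y))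
    try dsimp only at a1
    linarith
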